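/- arXiv:2509.20183 — 4 statements merged into one kernel-verified Lean document; each statement's English description precedes it below -/
import Mathlib

section
/- For every integer d ≥ 1 and every real ε with 0 < ε ≤ 1, there exists a polynomial p with real coefficients of degree at most ⌈√(2·d·log(2/ε))⌉ such that |x^d − p(x)| ≤ ε for all x ∈ [−1, 1]. -/
/-!
Expanding `(2 * X) ^ d` in Chebyshev polynomials gives `∑ (d.choose i) T (i - j)` over `i + j = d`,
that is, `X ^ d` is the expectation of `T S`, where `S` is the position of a simple random walk
after `d` steps. Dropping the terms with `K < |S|` leaves degree at most `K`, and as `|T S| ≤ 1` on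
`[-1, 1]` it costs at most `ℙ (K < |S|)`. Chernoff's bound for this probability needs the moment
generating function of `S`, which is the same expansion evaluated at `cosh t`, where
`T n` takes the value `cosh (n * t)`.
-/

section ChebyshevExpansion

open Polynomial Polynomial.Chebyshev Finset

lemma two_mul_X_mul_chebyshevT (R : Type*) [CommRing R] (n : ℤ) :
    2 * X * T R n = T R (n + 1) + T R (n - 1) := by
  rw [T_add_one, sub_add_cancel]

lemma two_mul_X_pow_eq_sum_chebyshevT (R : Type*) [CommRing R] (d : ℕ) :
    (2 * X : R[X]) ^ d = ∑ ij ∈ antidiagonal d, d.choose ij.1 • T R (ij.1 - ij.2) := by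
  induction d with
  | zero => simp
  | succ d ih =>
    rw [pow_succ', ih, sum_antidiagonal_choose_succ_nsmul fun i j => T R (i - j),
      ← sum_add_distrib, mul_sum]
    refine sum_congr rfl fun ij hij => ?_
    have choose_symm : d.choose ij.2 = d.choose ij.1 :=
      (Nat.choose_symm_of_eq_add (mem_antidiagonal.mp hij).symm).symm
    rw [choose_symm, mul_smul_comm, two_mul_X_mul_chebyshevT, smul_add, add_comm]
    push_cast
    congr 3 <;> ring

lemma two_mul_pow_eq_sum_eval_chebyshevT {R : Type*} [CommRing R] (d : ℕ) (x : R) :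
    (2 * x) ^ d = ∑ ij ∈ antidiagonal d, (d.choose ij.1 : R) * (T R (ij.1 - ij.2)).eval x := by
  simpa [eval_finsetSum] using congrArg (eval x) (two_mul_X_pow_eq_sum_chebyshevT R d)

lemma sum_choose_mul_cosh (d : ℕ) (t : ℝ) :
    ∑ ij ∈ antidiagonal d, (d.choose ij.1 : ℝ) * Real.cosh ((ij.1 - ij.2) * t) =
      (2 * Real.cosh t) ^ d := by
  simp [two_mul_pow_eq_sum_eval_chebyshevT]

lemma one_le_two_mul_cosh_mul_exp {t r s : ℝ} (ht : 0 ≤ t) (hrs : r ≤ |s|) :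
    1 ≤ 2 * Real.cosh (s * t) * Real.exp (-(t * r)) := by
  rw [Real.exp_neg, ← div_eq_mul_inv, one_le_div (Real.exp_pos _)]
  calc Real.exp (t * r) ≤ Real.exp |s * t| := by
        rw [abs_mul, abs_of_nonneg ht, mul_comm]; gcongr
    _ ≤ Real.exp (s * t) + Real.exp (-(s * t)) := Real.exp_abs_le _
    _ = 2 * Real.cosh (s * t) := by rw [Real.cosh_eq]; ring

lemma sum_choose_filter_le_cosh_pow_mul_exp (d : ℕ) {t : ℝ} (ht : 0 ≤ t) (r : ℝ) :
    ∑ ij ∈ antidiagonal d with r ≤ |(ij.1 - ij.2 : ℝ)|, (d.choose ij.1 : ℝ) ≤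
      2 * (2 * Real.cosh t) ^ d * Real.exp (-(t * r)) := by
  calc _ ≤ ∑ ij ∈ antidiagonal d with r ≤ |(ij.1 - ij.2 : ℝ)|,
          (d.choose ij.1 : ℝ) * (2 * Real.cosh ((ij.1 - ij.2) * t) * Real.exp (-(t * r))) :=
        sum_le_sum fun ij hij => le_mul_of_one_le_right (Nat.cast_nonneg _)
          (one_le_two_mul_cosh_mul_exp ht (mem_filter.mp hij).2)
    _ ≤ ∑ ij ∈ antidiagonal d,
          (d.choose ij.1 : ℝ) * (2 * Real.cosh ((ij.1 - ij.2) * t) * Real.exp (-(t * r))) :=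
        sum_le_sum_of_subset_of_nonneg (filter_subset _ _) fun _ _ _ => by positivity
    _ = 2 * (2 * Real.cosh t) ^ d * Real.exp (-(t * r)) := by
        rw [← sum_choose_mul_cosh, mul_sum, sum_mul]
        exact sum_congr rfl fun _ _ => by ring

lemma sum_choose_filter_le_two_pow_mul_exp {d : ℕ} (hd : d ≠ 0) {r : ℝ} (hr : 0 ≤ r) :
    ∑ ij ∈ antidiagonal d with r ≤ |(ij.1 - ij.2 : ℝ)|, (d.choose ij.1 : ℝ) ≤
      2 ^ d * (2 * Real.exp (-(r ^ 2 / (2 * d)))) := by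
  -- `t = r / d` minimizes `d * t ^ 2 / 2 - t * r`
  calc _ ≤ 2 * (2 * Real.cosh (r / d)) ^ d * Real.exp (-(r / d * r)) :=
        sum_choose_filter_le_cosh_pow_mul_exp d (by positivity) r
    _ ≤ 2 * (2 * Real.exp ((r / d) ^ 2 / 2)) ^ d * Real.exp (-(r / d * r)) := by
        gcongr; exact Real.cosh_le_exp_half_sq _
    _ = 2 ^ d * (2 * Real.exp (d * ((r / d) ^ 2 / 2) + -(r / d * r))) := by
        rw [mul_pow, ← Real.exp_nat_mul, Real.exp_add]; ring
    _ = 2 ^ d * (2 * Real.exp (-(r ^ 2 / (2 * d)))) := by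
        congr 3; field_simp; ring

/-- The sum of the terms of degree at most `K` in the Chebyshev expansion of `X ^ d`, a low-degree
approximation of `X ^ d` on `[-1, 1]`. The index runs over `i + j = d`, so that `T n` and `T (-n)`,
which are equal, both occur. -/
noncomputable def monomialChebyshevTruncation (d K : ℕ) : ℝ[X] :=
  ((2 : ℝ) ^ d)⁻¹ • ∑ ij ∈ antidiagonal d with (ij.1 - ij.2 : ℤ).natAbs ≤ K,
    d.choose ij.1 • T ℝ (ij.1 - ij.2)

lemma natDegree_monomialChebyshevTruncation_le (d K : ℕ) :
    (monomialChebyshevTruncation d K).natDegree ≤ K := by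
  refine (natDegree_smul_le _ _).trans (natDegree_sum_le_of_forall_le _ _ fun ij hij => ?_)
  exact (natDegree_smul_le _ _).trans ((natDegree_T ℝ _).trans_le (mem_filter.mp hij).2)

lemma pow_sub_eval_monomialChebyshevTruncation (d K : ℕ) (x : ℝ) :
    x ^ d - (monomialChebyshevTruncation d K).eval x =
      (2 ^ d)⁻¹ * ∑ ij ∈ antidiagonal d with ¬(ij.1 - ij.2 : ℤ).natAbs ≤ K,
        d.choose ij.1 * (T ℝ (ij.1 - ij.2)).eval x := by
  have pow_eq : x ^ d = (2 ^ d)⁻¹ * (2 * x) ^ d := by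
    rw [mul_pow, inv_mul_cancel_left₀ (by positivity)]
  rw [pow_eq, two_mul_pow_eq_sum_eval_chebyshevT,
    ← sum_filter_add_sum_filter_not _ fun ij => (ij.1 - ij.2 : ℤ).natAbs ≤ K]
  simp only [monomialChebyshevTruncation, eval_smul, eval_finsetSum, nsmul_eq_mul, smul_eq_mul,
    eval_mul, eval_natCast]
  ring

lemma abs_pow_sub_eval_monomialChebyshevTruncation_le_sum_choose (d K : ℕ) {x : ℝ}
    (hx : |x| ≤ 1) :
    |x ^ d - (monomialChebyshevTruncation d K).eval x| ≤
      (2 ^ d)⁻¹ * ∑ ij ∈ antidiagonal d with (K : ℝ) ≤ |(ij.1 - ij.2 : ℝ)|,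
        (d.choose ij.1 : ℝ) := by
  rw [pow_sub_eval_monomialChebyshevTruncation, abs_mul, abs_of_pos (by positivity)]
  gcongr
  calc _ ≤ ∑ ij ∈ antidiagonal d with ¬(ij.1 - ij.2 : ℤ).natAbs ≤ K, (d.choose ij.1 : ℝ) := by
        refine (abs_sum_le_sum_abs _ _).trans (sum_le_sum fun ij _ => ?_)
        rw [abs_mul, Nat.abs_cast]
        exact mul_le_of_le_one_right (Nat.cast_nonneg _) (abs_eval_T_real_le_one _ hx)
    _ ≤ ∑ ij ∈ antidiagonal d with (K : ℝ) ≤ |(ij.1 - ij.2 : ℝ)|, (d.choose ij.1 : ℝ) := by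
        refine sum_le_sum_of_subset_of_nonneg (monotone_filter_right _ fun ij _ hij => ?_)
          fun _ _ _ => Nat.cast_nonneg _
        have hK : (K : ℤ) ≤ |(ij.1 - ij.2 : ℤ)| := by rw [Int.abs_eq_natAbs]; lia
        exact_mod_cast hK

theorem abs_pow_sub_eval_monomialChebyshevTruncation_le_exp {d : ℕ} (hd : d ≠ 0) (K : ℕ) {x : ℝ}
    (hx : |x| ≤ 1) :
    |x ^ d - (monomialChebyshevTruncation d K).eval x| ≤
      2 * Real.exp (-((K : ℝ) ^ 2 / (2 * d))) :=
  (abs_pow_sub_eval_monomialChebyshevTruncation_le_sum_choose d K hx).trans <|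
    inv_mul_le_of_le_mul₀ (by positivity) (by positivity)
      (sum_choose_filter_le_two_pow_mul_exp hd K.cast_nonneg)

end ChebyshevExpansion

/-- Chebyshev-based low-degree approximation of the monomial `x^d`
on `[-1, 1]`. -/
theorem monomial_chebyshev_approx (d : ℕ) (hd : 1 ≤ d) (ε : ℝ) (hε : 0 < ε) (hε' : ε ≤ 1) :
    ∃ p : Polynomial ℝ,
      p.natDegree ≤ ⌈Real.sqrt (2 * d * Real.log (2 / ε))⌉₊ ∧
      ∀ x ∈ Set.Icc (-1 : ℝ) 1, |x ^ d - p.eval x| ≤ ε := by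
  set K := ⌈Real.sqrt (2 * d * Real.log (2 / ε))⌉₊
  have log_le : Real.log (2 / ε) ≤ (K : ℝ) ^ 2 / (2 * d) := by
    rw [le_div_iff₀' (by positivity)]
    exact (Real.sqrt_le_left K.cast_nonneg).mp (Nat.le_ceil _)
  refine ⟨monomialChebyshevTruncation d K, natDegree_monomialChebyshevTruncation_le d K,
    fun x hx => ?_⟩
  calc |x ^ d - (monomialChebyshevTruncation d K).eval x|
      ≤ 2 * Real.exp (-((K : ℝ) ^ 2 / (2 * d))) :=
        abs_pow_sub_eval_monomialChebyshevTruncation_le_exp (by lia) K (abs_le.mpr hx)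
    _ ≤ 2 * Real.exp (-Real.log (2 / ε)) := by gcongr
    _ = ε := by rw [Real.exp_neg, Real.exp_log (by positivity), inv_div]; ring
end

section
/- There exists a constant C ≥ 1 such that for every real κ ≥ 2 and every real ε with 0 < ε ≤ 1/2, there exists a polynomial p with real coefficients of degree at most C·√κ·log(κ/ε) satisfying |p(x) − log(x)| ≤ ε for all x ∈ [1/κ, 1]. -/
/-!
For `|r| < 1` the Taylor series of `log (1 - z)` at `z = r * exp (θ * I)` has real part
`log (1 - 2 * r * cos θ + r ^ 2) / 2 = -∑ j ≥ 1, r ^ j / j * cos (j * θ)`, a Chebyshev series in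
`t = cos θ` whose truncation error decays like `r ^ n`. The affine substitution
`1 - 2 * r * t + r ^ 2 = (1 + r) ^ 2 * x` carries `t ∈ [-1, 1]` to `x ∈ [u ^ 2, 1]` with
`u = (1 - r) / (1 + r)`, so truncations are polynomial approximations of `log x` there. For
`u = 1 / √κ` the ratio `r = (1 - u) / (1 + u)` is at most `exp (-2 * u)`, so degree
`√κ / 2 * log (4 / ε)` suffices: the tail of the series also carries a factor `1 / n`, which absorbs
the factor `1 / (1 - r) = (√κ + 1) / 2` and keeps `κ` out of the logarithm.
-/

open Polynomial Finset

lemma logTaylor_neg (n : ℕ) (z : ℂ) :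
    Complex.logTaylor n (-z) = -∑ j ∈ range n, z ^ j / j := by
  rw [Complex.logTaylor, ← sum_neg_distrib]
  refine sum_congr rfl fun j _ => ?_
  have sign : (-1 : ℂ) ^ j * (-1) ^ j = 1 := by rw [← mul_pow]; simp
  rw [neg_pow z, pow_succ]
  linear_combination (-(z ^ j / j)) * sign

lemma abs_log_norm_one_sub_add_sum_le {z : ℂ} (hz : ‖z‖ < 1) (n : ℕ) :
    |Real.log ‖1 - z‖ + ∑ j ∈ range (n + 1), (z ^ j).re / j|
      ≤ ‖z‖ ^ (n + 1) / ((1 - ‖z‖) * (n + 1)) := by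
  have taylor := (Complex.abs_re_le_norm _).trans
    (Complex.norm_log_sub_logTaylor_le n (z := -z) (by rwa [norm_neg]))
  rwa [logTaylor_neg, sub_neg_eq_add, ← sub_eq_add_neg, Complex.add_re, Complex.log_re,
    Complex.re_sum, norm_neg, ← div_eq_mul_inv, div_div,
    sum_congr rfl fun j _ => Complex.div_natCast_re (z ^ j) j] at taylor

lemma norm_one_sub_mul_exp_sq (r θ : ℝ) :
    ‖1 - r * Complex.exp (θ * Complex.I)‖ ^ 2 = 1 - 2 * r * Real.cos θ + r ^ 2 := by
  rw [← Complex.normSq_eq_norm_sq, Complex.normSq_sub, map_one, one_mul, Complex.conj_re,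
    Complex.re_ofReal_mul, Complex.exp_ofReal_mul_I_re, map_mul, Complex.normSq_ofReal,
    Complex.normSq_eq_norm_sq (Complex.exp _), Complex.norm_exp_ofReal_mul_I]
  ring

lemma re_mul_exp_pow (r θ : ℝ) (j : ℕ) :
    ((r * Complex.exp (θ * Complex.I)) ^ j).re = r ^ j * Real.cos (j * θ) := by
  have polar : (r * Complex.exp (θ * Complex.I)) ^ j
      = ((r ^ j : ℝ) : ℂ) * Complex.exp (((j * θ : ℝ) : ℂ) * Complex.I) := by
    rw [mul_pow, ← Complex.exp_nat_mul]
    push_cast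
    ring_nf
  rw [polar, Complex.re_ofReal_mul, Complex.exp_ofReal_mul_I_re]

lemma abs_log_add_two_mul_sum_cos_le {r : ℝ} (hr : |r| < 1) (θ : ℝ) (n : ℕ) :
    |Real.log (1 - 2 * r * Real.cos θ + r ^ 2)
      + 2 * ∑ j ∈ range (n + 1), r ^ j / j * Real.cos (j * θ)|
      ≤ 2 * (|r| ^ (n + 1) / ((1 - |r|) * (n + 1))) := by
  have norm_z : ‖(r : ℂ) * Complex.exp (θ * Complex.I)‖ = |r| := by
    rw [norm_mul, Complex.norm_exp_ofReal_mul_I, Complex.norm_real, mul_one, Real.norm_eq_abs]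
  have bound := abs_log_norm_one_sub_add_sum_le (norm_z.trans_lt hr) n
  simp only [norm_z, re_mul_exp_pow, mul_div_right_comm] at bound
  rw [← norm_one_sub_mul_exp_sq, Real.log_pow, Nat.cast_ofNat, ← mul_add, abs_mul, abs_two]
  gcongr

/-- The Chebyshev expansion `log (1 - 2 * r * t + r ^ 2) = -2 * ∑ j ≥ 1, r ^ j / j * T_j(t)`,
truncated at degree `n`. The sum may start at `j = 0` because `r ^ 0 / 0 = 0`. -/
noncomputable def chebyshevLogSum (r : ℝ) (n : ℕ) : ℝ[X] :=
  -∑ j ∈ range (n + 1), C (2 * (r ^ j / j)) * Chebyshev.T ℝ j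

lemma natDegree_chebyshevLogSum_le (r : ℝ) (n : ℕ) : (chebyshevLogSum r n).natDegree ≤ n := by
  rw [chebyshevLogSum, natDegree_neg]
  refine natDegree_sum_le_of_forall_le _ _ fun j hj => (natDegree_C_mul_le _ _).trans ?_
  rw [Chebyshev.natDegree_T, Int.natAbs_natCast]
  exact mem_range_succ_iff.mp hj

lemma eval_cos_chebyshevLogSum (r θ : ℝ) (n : ℕ) :
    (chebyshevLogSum r n).eval (Real.cos θ)
      = -(2 * ∑ j ∈ range (n + 1), r ^ j / j * Real.cos (j * θ)) := by
  simp [chebyshevLogSum, eval_finsetSum, mul_sum, mul_assoc]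

lemma abs_eval_chebyshevLogSum_sub_log_le {r t : ℝ} (hr : |r| < 1) (ht : t ∈ Set.Icc (-1) 1)
    (n : ℕ) :
    |(chebyshevLogSum r n).eval t - Real.log (1 - 2 * r * t + r ^ 2)|
      ≤ 2 * (|r| ^ (n + 1) / ((1 - |r|) * (n + 1))) := by
  rw [← Real.cos_arccos ht.1 ht.2, eval_cos_chebyshevLogSum, abs_sub_comm, sub_neg_eq_add]
  exact abs_log_add_two_mul_sum_cos_le hr _ n

/-- The affine polynomial `t` in `x` determined by `1 - 2 * r * t + r ^ 2 = (1 + r) ^ 2 * x`, which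
turns approximations of `log (1 - 2 * r * t + r ^ 2)` into approximations of `log x`. -/
noncomputable def chebyshevVariable (r : ℝ) : ℝ[X] :=
  C (-(1 + r) ^ 2 / (2 * r)) * X + C ((1 + r ^ 2) / (2 * r))

lemma two_mul_mul_eval_chebyshevVariable {r : ℝ} (hr : r ≠ 0) (x : ℝ) :
    2 * r * (chebyshevVariable r).eval x = 1 + r ^ 2 - (1 + r) ^ 2 * x := by
  simp only [chebyshevVariable, eval_add, eval_mul, eval_C, eval_X]
  field_simp
  ring

lemma eval_chebyshevVariable_mem_Icc {r x : ℝ} (hr : 0 < r)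
    (hx : x ∈ Set.Icc (((1 - r) / (1 + r)) ^ 2) 1) :
    (chebyshevVariable r).eval x ∈ Set.Icc (-1) 1 := by
  have eval_eq := two_mul_mul_eval_chebyshevVariable hr.ne' x
  have lower : (1 - r) ^ 2 ≤ (1 + r) ^ 2 * x := by
    have := hx.1
    rwa [div_pow, div_le_iff₀' (by positivity)] at this
  have upper : (1 + r) ^ 2 * x ≤ (1 + r) ^ 2 := mul_le_of_le_one_right (by positivity) hx.2
  constructor <;> nlinarith

lemma exists_natDegree_le_forall_abs_eval_sub_log_le {r : ℝ} (hr₀ : 0 < r) (hr₁ : r < 1) (n : ℕ) :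
    ∃ p : ℝ[X], p.natDegree ≤ n ∧ ∀ x ∈ Set.Icc (((1 - r) / (1 + r)) ^ 2) 1,
      |p.eval x - Real.log x| ≤ 2 * (r ^ (n + 1) / ((1 - r) * (n + 1))) := by
  refine ⟨(chebyshevLogSum r n).comp (chebyshevVariable r) - C (Real.log ((1 + r) ^ 2)), ?_, ?_⟩
  · rw [natDegree_sub_C]
    calc ((chebyshevLogSum r n).comp (chebyshevVariable r)).natDegree
        ≤ (chebyshevLogSum r n).natDegree * (chebyshevVariable r).natDegree := natDegree_comp_le
      _ ≤ n * 1 := Nat.mul_le_mul (natDegree_chebyshevLogSum_le r n) natDegree_linear_le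
      _ = n := mul_one n
  · intro x hx
    have hx₀ : 0 < x := (pow_pos (div_pos (by linarith) (by linarith)) 2).trans_le hx.1
    have bound := abs_eval_chebyshevLogSum_sub_log_le ((abs_of_pos hr₀).trans_lt hr₁)
      (eval_chebyshevVariable_mem_Icc hr₀ hx) n
    have log_arg : 1 - 2 * r * (chebyshevVariable r).eval x + r ^ 2 = (1 + r) ^ 2 * x := by
      rw [two_mul_mul_eval_chebyshevVariable hr₀.ne']
      ring
    rw [log_arg, Real.log_mul (by positivity) hx₀.ne', abs_of_pos hr₀] at bound
    rwa [eval_sub, eval_comp, eval_C, sub_sub]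

lemma one_sub_div_one_add_le_exp {u : ℝ} (hu₀ : 0 ≤ u) (hu₁ : u < 1) :
    (1 - u) / (1 + u) ≤ Real.exp (-(2 * u)) := by
  have hpos : 0 < (1 + u) / (1 - u) := div_pos (by linarith) (by linarith)
  have hlog : 2 * u ≤ Real.log ((1 + u) / (1 - u)) := by
    have := Real.sum_range_le_log_div hu₀ hu₁ 1
    simp only [sum_range_one, mul_zero, zero_add, pow_one, Nat.cast_zero,
      div_one] at this
    linarith
  rw [← inv_div, Real.exp_neg]
  gcongr
  exact (Real.le_log_iff_exp_le hpos).mp hlog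

lemma chebyshevLogSum_error_le {u ε : ℝ} (hu₀ : 0 < u) (hu₁ : u < 1) (hε₀ : 0 < ε) (hε₁ : ε ≤ 1)
    {n : ℕ} (hn : Real.log (4 / ε) ≤ 2 * u * (n + 1)) :
    2 * (((1 - u) / (1 + u)) ^ (n + 1) / ((1 - (1 - u) / (1 + u)) * (n + 1))) ≤ ε := by
  have pow_le : ((1 - u) / (1 + u)) ^ (n + 1) ≤ ε / 4 := by
    calc ((1 - u) / (1 + u)) ^ (n + 1)
        ≤ Real.exp (-(2 * u)) ^ (n + 1) :=
          pow_le_pow_left₀ (div_nonneg (by linarith) (by linarith))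
            (one_sub_div_one_add_le_exp hu₀.le hu₁) _
      _ = Real.exp (-(2 * u * (n + 1))) := by
          rw [← Real.exp_nat_mul]
          push_cast
          ring_nf
      _ ≤ Real.exp (-Real.log (4 / ε)) := by gcongr
      _ = ε / 4 := by rw [Real.exp_neg, Real.exp_log (by positivity), inv_div]
  have one_le_log : 1 ≤ Real.log (4 / ε) := by
    rw [Real.le_log_iff_exp_le (by positivity), le_div_iff₀ hε₀]
    nlinarith [Real.exp_one_lt_three, Real.exp_pos 1]
  have one_sub_ratio : 1 - (1 - u) / (1 + u) = 2 * u / (1 + u) := by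
    field_simp
    ring
  have denom_ge : 1 / 2 ≤ (1 - (1 - u) / (1 + u)) * (n + 1) := by
    rw [one_sub_ratio, div_mul_eq_mul_div, div_le_div_iff₀ two_pos (by linarith)]
    linarith
  calc 2 * (((1 - u) / (1 + u)) ^ (n + 1) / ((1 - (1 - u) / (1 + u)) * (n + 1)))
      ≤ 2 * ((ε / 4) / (1 / 2)) := by gcongr
    _ = ε := by ring

lemma log_four_div_le_two_mul_log_div {κ ε : ℝ} (hκ : 2 ≤ κ) (hε₀ : 0 < ε) (hε₁ : ε ≤ 1) :
    Real.log (4 / ε) ≤ 2 * Real.log (κ / ε) := by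
  rw [← Real.log_rpow (by positivity), Real.rpow_two]
  gcongr
  calc 4 / ε ≤ 4 / ε ^ 2 := by
        gcongr
        exact pow_le_of_le_one hε₀.le hε₁ two_ne_zero
    _ = (2 / ε) ^ 2 := by ring
    _ ≤ (κ / ε) ^ 2 := by gcongr

theorem log_low_degree_approx_general {κ ε : ℝ} (hκ : 1 < κ) (hε₀ : 0 < ε) (hε₁ : ε ≤ 1) :
    ∃ p : ℝ[X], (p.natDegree : ℝ) ≤ √κ / 2 * Real.log (4 / ε) ∧
      ∀ x ∈ Set.Icc (1 / κ) 1, |p.eval x - Real.log x| ≤ ε := by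
  obtain ⟨u, hu⟩ : ∃ u, u = 1 / √κ := ⟨_, rfl⟩
  have one_lt_sqrt : 1 < √κ := Real.lt_sqrt_of_sq_lt (by linarith)
  have hu₀ : 0 < u := by rw [hu]; positivity
  have hu₁ : u < 1 := by rw [hu]; exact (div_lt_one (by linarith)).mpr one_lt_sqrt
  have degree_eq : √κ / 2 * Real.log (4 / ε) = Real.log (4 / ε) / (2 * u) := by
    rw [hu]
    field_simp
  have left_endpoint : ((1 - (1 - u) / (1 + u)) / (1 + (1 - u) / (1 + u))) ^ 2 = 1 / κ := by
    have : (1 - (1 - u) / (1 + u)) / (1 + (1 - u) / (1 + u)) = u := by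
      field_simp
      ring
    rw [this, hu, div_pow, one_pow, Real.sq_sqrt (by linarith)]
  have log_nonneg : 0 ≤ Real.log (4 / ε) :=
    Real.log_nonneg ((one_le_div hε₀).mpr (by linarith))
  obtain ⟨p, hdeg, happrox⟩ := exists_natDegree_le_forall_abs_eval_sub_log_le
    (r := (1 - u) / (1 + u)) (div_pos (by linarith) (by linarith))
    ((div_lt_one (by linarith)).mpr (by linarith)) ⌊Real.log (4 / ε) / (2 * u)⌋₊
  rw [left_endpoint] at happrox
  refine ⟨p, ?_, fun x hx => (happrox x hx).trans (chebyshevLogSum_error_le hu₀ hu₁ hε₀ hε₁ ?_)⟩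
  · rw [degree_eq]
    exact (Nat.cast_le.mpr hdeg).trans (Nat.floor_le (by positivity))
  · exact (div_le_iff₀' (by positivity)).mp (Nat.lt_floor_add_one _).le

/-- There is a universal constant `C ≥ 1` such that the logarithm admits an
`ε`-uniform polynomial approximation of degree `O(√κ·log(κ/ε))` on `[1/κ, 1]`. -/
theorem log_low_degree_approx :
    ∃ C : ℝ, 1 ≤ C ∧ ∀ κ ε : ℝ, 2 ≤ κ → 0 < ε → ε ≤ 1 / 2 →
      ∃ p : Polynomial ℝ,
        (p.natDegree : ℝ) ≤ C * Real.sqrt κ * Real.log (κ / ε) ∧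
        ∀ x ∈ Set.Icc (1 / κ) 1, |p.eval x - Real.log x| ≤ ε := by
  refine ⟨1, le_rfl, fun κ ε hκ hε₀ hε₁ => ?_⟩
  obtain ⟨p, hdeg, happrox⟩ :=
    log_low_degree_approx_general (by linarith : 1 < κ) hε₀ (by linarith)
  have hlog := log_four_div_le_two_mul_log_div hκ hε₀ (by linarith)
  exact ⟨p, hdeg.trans (by nlinarith [Real.sqrt_nonneg κ]), happrox⟩
end

section
/- There exists a constant C ≥ 1 such that for every real κ ≥ 2 and every real ε with 0 < ε ≤ 1/2, there exists a polynomial p with real coefficients of degree at most C·√κ·log(κ/ε) satisfying |p(x) − 1/x| ≤ ε for all x ∈ [1/κ, 1]. -/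
/-!
If `q` is a polynomial with `q(0) ≠ 0`, then `p(x) = (1 - q(x) / q(0)) / x` is a polynomial, and
`p(x) - 1 / x = -q(x) / (q(0) x)`. So one wants `q` to be small on `[a, b]` and large at `0`. The
Chebyshev polynomial `T_n`, transplanted to `[a, b]`, is at most `1` in absolute value there, while
`T_n((u + u⁻¹) / 2) = (uⁿ + u⁻ⁿ) / 2` shows that its value at `0` is at least `uⁿ / 2`, where
`u = (√b + √a) / (√b - √a) ≥ exp √(a / b)`. Hence `n` of order `√(b / a) log (1 / (a ε))` suffices.
-/

open Polynomial Real

section ReciprocalApprox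

variable {K : Type*} [Field K]

/-- The polynomial `(1 - q(x) / q(0)) / x`, an approximation to `1 / x` wherever `q` is small
compared with `q(0)`. Since `divX` discards the constant coefficient, the quotient is exact only
if `q(0) ≠ 0`. -/
noncomputable def reciprocalApprox (q : K[X]) : K[X] :=
  (1 - C (q.eval 0)⁻¹ * q).divX

theorem natDegree_reciprocalApprox_le (q : K[X]) :
    (reciprocalApprox q).natDegree ≤ q.natDegree - 1 := by
  rw [reciprocalApprox, natDegree_divX_eq_natDegree_tsub_one]
  gcongr
  calc (1 - C (q.eval 0)⁻¹ * q).natDegree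
      ≤ max (natDegree (1 : K[X])) (C (q.eval 0)⁻¹ * q).natDegree := natDegree_sub_le _ _
    _ ≤ q.natDegree := by simpa using natDegree_C_mul_le _ q

theorem reciprocalApprox_mul_X {q : K[X]} (hq : q.eval 0 ≠ 0) :
    reciprocalApprox q * X = 1 - C (q.eval 0)⁻¹ * q := by
  have hcoeff : (1 - C (q.eval 0)⁻¹ * q).coeff 0 = 0 := by
    simp [coeff_zero_eq_eval_zero, hq]
  have hdivX := divX_mul_X_add (1 - C (q.eval 0)⁻¹ * q)
  rwa [hcoeff, C_0, add_zero] at hdivX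

theorem eval_reciprocalApprox_sub_one_div {q : K[X]} (hq : q.eval 0 ≠ 0) {x : K} (hx : x ≠ 0) :
    (reciprocalApprox q).eval x - 1 / x = -(q.eval x / (q.eval 0 * x)) := by
  have hmul : (reciprocalApprox q).eval x * x = 1 - (q.eval 0)⁻¹ * q.eval x := by
    simpa using congrArg (eval x) (reciprocalApprox_mul_X hq)
  rw [eq_div_of_mul_eq hx hmul]
  field_simp
  ring

end ReciprocalApprox

theorem eval_T_half_add_inv {K : Type*} [Field K] [NeZero (2 : K)] {u : K} (hu : u ≠ 0) (n : ℕ) :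
    (Chebyshev.T K n).eval ((u + u⁻¹) / 2) = (u ^ n + (u ^ n)⁻¹) / 2 := by
  have := invertibleOfNonzero (two_ne_zero (α := K))
  have htwo : 2 * ((u + u⁻¹) / 2) = u + u⁻¹ := mul_div_cancel₀ _ two_ne_zero
  rw [chebyshev_T_eq_dickson_one_one]
  simp only [eval_mul, eval_C, eval_comp, eval_X, eval_ofNat, htwo,
    dickson_one_one_eval_add_inv u u⁻¹ (mul_inv_cancel₀ hu), inv_pow, invOf_eq_inv]
  ring

theorem sub_div_add_le_exp_neg_div {r t : ℝ} (hr : 0 < r) (ht : 0 ≤ t) (htr : t ≤ r) :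
    (r - t) / (r + t) ≤ exp (-(t / r)) :=
  calc (r - t) / (r + t) ≤ (r - t) / r :=
        div_le_div_of_nonneg_left (sub_nonneg.2 htr) hr (le_add_of_nonneg_right ht)
    _ = 1 - t / r := by rw [sub_div, div_self hr.ne']
    _ ≤ exp (-(t / r)) := one_sub_le_exp_neg _

theorem log_two_mul_le {y : ℝ} (hy : 2 ≤ y) : log (2 * y) ≤ 2 * log y := by
  have hy_pos : 0 < y := by linarith
  rw [log_mul two_ne_zero hy_pos.ne', two_mul]
  gcongr

section ChebyshevIcc

variable {a b : ℝ}

/-- The Chebyshev polynomial `T_n` transplanted from `[-1, 1]` to `[a, b]`, with `a < b`. The affine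
substitution reverses orientation (`a ↦ 1`, `b ↦ -1`), so that points to the left of `a` are sent to
the right of `1`. -/
noncomputable def chebyshevIcc (a b : ℝ) (n : ℕ) : ℝ[X] :=
  (Chebyshev.T ℝ n).comp (C ((b + a) / (b - a)) - C (2 / (b - a)) * X)

theorem natDegree_chebyshevIcc_le (a b : ℝ) (n : ℕ) : (chebyshevIcc a b n).natDegree ≤ n := by
  have haffine : (C ((b + a) / (b - a)) - C (2 / (b - a)) * X).natDegree ≤ 1 := by compute_degree
  calc (chebyshevIcc a b n).natDegree
      ≤ (Chebyshev.T ℝ n).natDegree * (C ((b + a) / (b - a)) - C (2 / (b - a)) * X).natDegree :=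
        natDegree_comp_le
    _ ≤ n * 1 := by gcongr; simp
    _ = n := mul_one n

theorem abs_eval_chebyshevIcc_le_one (hab : a < b) (n : ℕ) {x : ℝ} (hx : x ∈ Set.Icc a b) :
    |(chebyshevIcc a b n).eval x| ≤ 1 := by
  obtain ⟨hax, hxb⟩ := hx
  have hba : 0 < b - a := sub_pos.2 hab
  have haffine : (b + a) / (b - a) - 2 / (b - a) * x = (b + a - 2 * x) / (b - a) := by ring
  simp only [chebyshevIcc, eval_comp, eval_sub, eval_mul, eval_C, eval_X, haffine]
  apply Chebyshev.abs_eval_T_real_le_one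
  rw [abs_div, abs_of_pos hba, div_le_one hba, abs_le]
  constructor <;> linarith

theorem half_pow_le_eval_zero_chebyshevIcc (ha : 0 < a) (hab : a < b) (n : ℕ) :
    ((√b + √a) / (√b - √a)) ^ n / 2 ≤ (chebyshevIcc a b n).eval 0 := by
  have hsub : 0 < √b - √a := sub_pos.2 (sqrt_lt_sqrt ha.le hab)
  have hadd : 0 < √b + √a := by positivity
  set u := (√b + √a) / (√b - √a) with hu
  have hu_pos : 0 < u := div_pos hadd hsub
  have hcenter : (b + a) / (b - a) = (u + u⁻¹) / 2 := by
    rw [hu, ← sq_sqrt ha.le, ← sq_sqrt (ha.trans hab).le, sq_sub_sq]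
    simp only [sqrt_sq, sqrt_nonneg]
    field_simp
    ring
  have heval : (chebyshevIcc a b n).eval 0 = (u ^ n + (u ^ n)⁻¹) / 2 := by
    simp [chebyshevIcc, hcenter, eval_T_half_add_inv hu_pos.ne']
  rw [heval]
  gcongr
  exact le_add_of_nonneg_right (by positivity)

theorem abs_eval_reciprocalApprox_chebyshevIcc_le (ha : 0 < a) (hab : a < b) (n : ℕ) {x : ℝ}
    (hx : x ∈ Set.Icc a b) :
    |(reciprocalApprox (chebyshevIcc a b n)).eval x - 1 / x| ≤
      2 / a * ((√b - √a) / (√b + √a)) ^ n := by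
  have hsub : 0 < √b - √a := sub_pos.2 (sqrt_lt_sqrt ha.le hab)
  have hx_pos : 0 < x := ha.trans_le hx.1
  have hgrowth := half_pow_le_eval_zero_chebyshevIcc ha hab n
  have hzero : 0 < (chebyshevIcc a b n).eval 0 := lt_of_lt_of_le (by positivity) hgrowth
  rw [eval_reciprocalApprox_sub_one_div hzero.ne' hx_pos.ne', abs_neg, abs_div,
    abs_of_pos (mul_pos hzero hx_pos)]
  calc |(chebyshevIcc a b n).eval x| / ((chebyshevIcc a b n).eval 0 * x)
      ≤ 1 / (((√b + √a) / (√b - √a)) ^ n / 2 * a) := by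
        gcongr
        exacts [abs_eval_chebyshevIcc_le_one hab n hx, hx.1]
    _ = 2 / a * ((√b - √a) / (√b + √a)) ^ n := by
        rw [← inv_div (√b + √a), inv_pow]
        field_simp

theorem abs_eval_reciprocalApprox_chebyshevIcc_le_exp (ha : 0 < a) (hab : a < b) (n : ℕ) {x : ℝ}
    (hx : x ∈ Set.Icc a b) :
    |(reciprocalApprox (chebyshevIcc a b n)).eval x - 1 / x| ≤ 2 / a * exp (-(n * √(a / b))) := by
  have hsqrt : √a ≤ √b := sqrt_le_sqrt hab.le
  calc |(reciprocalApprox (chebyshevIcc a b n)).eval x - 1 / x|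
      ≤ 2 / a * ((√b - √a) / (√b + √a)) ^ n :=
        abs_eval_reciprocalApprox_chebyshevIcc_le ha hab n hx
    _ ≤ 2 / a * exp (-(√a / √b)) ^ n := by
        gcongr
        exact sub_div_add_le_exp_neg_div (sqrt_pos.2 (ha.trans hab)) (sqrt_nonneg a) hsqrt
    _ = 2 / a * exp (-(n * √(a / b))) := by
        rw [← exp_nat_mul, sqrt_div ha.le, mul_neg]

end ChebyshevIcc

theorem inverse_low_degree_approx_general {a b ε : ℝ} (ha : 0 < a) (hab : a < b) (hε : 0 < ε)
    (haε : a * ε ≤ 1 / 2) :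
    ∃ p : ℝ[X], (p.natDegree : ℝ) ≤ 2 * √(b / a) * log (1 / (a * ε)) ∧
      ∀ x ∈ Set.Icc a b, |p.eval x - 1 / x| ≤ ε := by
  have hb : 0 < b := ha.trans hab
  have hy : 2 ≤ 1 / (a * ε) := by
    simpa using one_div_le_one_div_of_le (mul_pos ha hε) haε
  set y := 1 / (a * ε) with hy_def
  have hd_pos : 0 < √(b / a) * log (2 * y) :=
    mul_pos (by positivity) (log_pos (by linarith))
  set n := ⌈√(b / a) * log (2 * y)⌉₊
  refine ⟨reciprocalApprox (chebyshevIcc a b n), ?_, fun x hx => ?_⟩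
  · have hn_lt : ((n - 1 : ℕ) : ℝ) < √(b / a) * log (2 * y) :=
      Nat.lt_ceil.1 (Nat.sub_lt (Nat.ceil_pos.2 hd_pos) one_pos)
    calc ((reciprocalApprox (chebyshevIcc a b n)).natDegree : ℝ)
        ≤ (n - 1 : ℕ) := by
          exact_mod_cast (natDegree_reciprocalApprox_le _).trans
            (Nat.sub_le_sub_right (natDegree_chebyshevIcc_le a b n) 1)
      _ ≤ √(b / a) * (2 * log y) := hn_lt.le.trans (by gcongr; exact log_two_mul_le hy)
      _ = 2 * √(b / a) * log y := by ring
  · have hlog_le : log (2 * y) ≤ n * √(a / b) := by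
      rw [← inv_div b a, sqrt_inv, ← div_eq_mul_inv, le_div_iff₀' (by positivity)]
      exact Nat.le_ceil _
    calc |(reciprocalApprox (chebyshevIcc a b n)).eval x - 1 / x|
        ≤ 2 / a * exp (-(n * √(a / b))) :=
          abs_eval_reciprocalApprox_chebyshevIcc_le_exp ha hab n hx
      _ ≤ 2 / a * exp (-log (2 * y)) := by gcongr
      _ = ε := by
          rw [exp_neg, exp_log (by positivity), hy_def]
          field_simp

/-- There is a universal constant `C ≥ 1` such that `1/x` admits an
`ε`-uniform polynomial approximation of degree `O(√κ·log(κ/ε))` on `[1/κ, 1]`. -/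
theorem inverse_low_degree_approx :
    ∃ C : ℝ, 1 ≤ C ∧ ∀ κ ε : ℝ, 2 ≤ κ → 0 < ε → ε ≤ 1 / 2 →
      ∃ p : Polynomial ℝ,
        (p.natDegree : ℝ) ≤ C * Real.sqrt κ * Real.log (κ / ε) ∧
        ∀ x ∈ Set.Icc (1 / κ) 1, |p.eval x - 1 / x| ≤ ε := by
  refine ⟨2, one_le_two, fun κ ε hκ hε hε2 => ?_⟩
  have hκ_inv : 1 / κ ≤ 1 / 2 := one_div_le_one_div_of_le two_pos hκ
  have h := inverse_low_degree_approx_general (a := 1 / κ) (b := 1) (by positivity) (by linarith)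
    hε (by nlinarith)
  simpa [div_eq_mul_inv, mul_comm] using h
end

section
/- Let N ≥ 1, T ≥ 1, and let V_0, …, V_{T−1} ∈ ℂ^{N×N} be unitary matrices. Let A ∈ ℂ^{(T+1)N × (T+1)N} be the block matrix with blocks A_{p,p} = I_N for p ∈ {0,…,T}, A_{p,p+1} = −V_p for 0 ≤ p ≤ T−1, and all other blocks zero. Then A is invertible, ‖A‖ ≤ 2, and ‖A^{−1}‖ ≤ T + 1. -/
/-- The ℓ²→ℓ² operator norm (largest singular value) of a complex matrix. -/
noncomputable def opNorm {n : Type*} [Fintype n] [DecidableEq n]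
    (A : Matrix n n ℂ) : ℝ :=
  ‖Matrix.toEuclideanCLM (𝕜 := ℂ) A‖

/-! The clock matrix is `1 - W`, where `W` carries the `V p` on its block superdiagonal. The rows
of blocks of `W` act on different blocks of a vector, so `‖W‖ ≤ max ‖V p‖ = 1`; and `W` is
strictly block triangular, so `W ^ (T + 1) = 0` and the Neumann series `∑ W ^ k` for `(1 - W)⁻¹`
stops after `T + 1` terms, each of norm at most `1`. -/

open Finset
open scoped Matrix Matrix.Norms.L2Operator

section NeumannSeries

theorem norm_geom_sum_le_geom_sum {R : Type*} [SeminormedRing R] [NormOneClass R] {x : R} {c : ℝ}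
    (hx : ‖x‖ ≤ c) (m : ℕ) : ‖∑ k ∈ range m, x ^ k‖ ≤ ∑ k ∈ range m, c ^ k :=
  norm_sum_le_of_le _ fun k _ => (norm_pow_le x k).trans (by gcongr)

theorem inv_one_sub_eq_geom_sum_of_pow_eq_zero {ι R : Type*} [Fintype ι] [DecidableEq ι]
    [CommRing R] {M : Matrix ι ι R} {m : ℕ} (hM : M ^ m = 0) : (1 - M)⁻¹ = ∑ k ∈ range m, M ^ k :=
  Matrix.inv_eq_right_inv <| by rw [mul_neg_geom_sum, hM, sub_zero]

end NeumannSeries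

section StrictlyBlockTriangular

variable {ι R : Type*} [Fintype ι] [DecidableEq ι] [Semiring R] {M : Matrix ι ι R} {d : ι → ℕ}

theorem pow_apply_eq_zero_of_strictlyBlockTriangular (hM : ∀ x y, d y ≤ d x → M x y = 0) {k : ℕ} :
    ∀ {x y}, d y < d x + k → (M ^ k) x y = 0 := by
  induction k with
  | zero =>
    intro x y hxy
    exact Matrix.one_apply_ne fun h => by simp [h] at hxy
  | succ k ih =>
    intro x y hxy
    rw [pow_succ, Matrix.mul_apply]
    refine sum_eq_zero fun z _ => ?_
    rcases lt_or_ge (d z) (d x + k) with hz | hz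
    · rw [ih hz, zero_mul]
    · rw [hM z y (by lia), mul_zero]

theorem pow_eq_zero_of_strictlyBlockTriangular (hM : ∀ x y, d y ≤ d x → M x y = 0) {m : ℕ}
    (hd : ∀ x, d x < m) : M ^ m = 0 := by
  ext x y
  exact pow_apply_eq_zero_of_strictlyBlockTriangular hM ((hd y).trans_le (Nat.le_add_left _ _))

end StrictlyBlockTriangular

section L2OpNorm

variable {m n 𝕜 : Type*} [Fintype m] [Fintype n] [DecidableEq n] [RCLike 𝕜]

theorem sum_norm_sq_mulVec_le (M : Matrix m n 𝕜) (v : n → 𝕜) :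
    ∑ i, ‖(M *ᵥ v) i‖ ^ 2 ≤ ‖M‖ ^ 2 * ∑ j, ‖v j‖ ^ 2 := by
  have h := pow_le_pow_left₀ (norm_nonneg _) (M.l2_opNorm_mulVec (WithLp.toLp 2 v)) 2
  simpa [mul_pow, EuclideanSpace.norm_sq_eq] using h

theorem l2_opNorm_le_of_sum_norm_sq_mulVec_le {M : Matrix m n 𝕜} {c : ℝ} (hc : 0 ≤ c)
    (hM : ∀ v, ∑ i, ‖(M *ᵥ v) i‖ ^ 2 ≤ c ^ 2 * ∑ j, ‖v j‖ ^ 2) : ‖M‖ ≤ c := by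
  rw [Matrix.l2_opNorm_def]
  refine ContinuousLinearMap.opNorm_le_bound _ hc fun v => ?_
  rw [← sq_le_sq₀ (norm_nonneg _) (by positivity), mul_pow, EuclideanSpace.norm_sq_eq,
    EuclideanSpace.norm_sq_eq]
  exact hM v

theorem l2_opNorm_le_one_of_mem_unitaryGroup {U : Matrix n n 𝕜}
    (hU : U ∈ Matrix.unitaryGroup n 𝕜) : ‖U‖ ≤ 1 := by
  cases subsingleton_or_nontrivial (Matrix n n 𝕜) with
  | inl h => simp [Subsingleton.elim U 0]
  | inr h => exact (CStarRing.norm_of_mem_unitary hU).le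

end L2OpNorm

/-- The block matrix with `T + 1` rows of blocks whose `(p, p + 1)` block is `V p` and whose other
blocks vanish; the clock matrix is `1 - blockSuperdiagonal T V`. As in the theorem on the clock
matrix, `V` is indexed by `ℕ`, of which only `V 0, …, V (T - 1)` matter. -/
def blockSuperdiagonal {n R : Type*} [Zero R] (T : ℕ) (V : ℕ → Matrix n n R) :
    Matrix (Fin (T + 1) × n) (Fin (T + 1) × n) R :=
  Matrix.of fun x y => if (y.1 : ℕ) = x.1 + 1 then V x.1 x.2 y.2 else 0

namespace blockSuperdiagonal

variable {n R 𝕜 : Type*} {T : ℕ}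

theorem apply_eq_zero_of_le [Zero R] (V : ℕ → Matrix n n R) {x y : Fin (T + 1) × n}
    (hxy : (y.1 : ℕ) ≤ x.1) : blockSuperdiagonal T V x y = 0 :=
  if_neg (by lia)

theorem eq_one_sub [Ring R] [DecidableEq n] {V : ℕ → Matrix n n R}
    {A : Matrix (Fin (T + 1) × n) (Fin (T + 1) × n) R}
    (hA : ∀ (p q : Fin (T + 1)) (i j : n), A (p, i) (q, j) =
      if (q : ℕ) = (p : ℕ) then (1 : Matrix n n R) i j
      else if (q : ℕ) = (p : ℕ) + 1 then -(V p i j) else 0) :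
    A = 1 - blockSuperdiagonal T V := by
  ext ⟨p, i⟩ ⟨q, j⟩
  rw [hA, Matrix.sub_apply]
  rcases eq_or_ne q p with rfl | hqp
  · simp [apply_eq_zero_of_le, Matrix.one_apply]
  · rw [if_neg (Fin.val_ne_of_ne hqp), Matrix.one_apply_ne fun h => hqp (congrArg Prod.fst h).symm]
    simp only [blockSuperdiagonal, Matrix.of_apply]
    split_ifs <;> simp

variable [Fintype n]

theorem pow_eq_zero [Semiring R] [DecidableEq n] (V : ℕ → Matrix n n R) :
    blockSuperdiagonal T V ^ (T + 1) = 0 :=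
  pow_eq_zero_of_strictlyBlockTriangular (d := fun x => (x.1 : ℕ))
    (fun _ _ => apply_eq_zero_of_le V) fun x => x.1.isLt

theorem mulVec_castSucc [NonUnitalNonAssocSemiring R] (V : ℕ → Matrix n n R)
    (v : Fin (T + 1) × n → R) (p : Fin T) (i : n) :
    (blockSuperdiagonal T V *ᵥ v) (p.castSucc, i) = (V p *ᵥ fun j => v (p.succ, j)) i := by
  simp only [Matrix.mulVec, dotProduct, Fintype.sum_prod_type, blockSuperdiagonal, Matrix.of_apply,
    Fin.val_castSucc]
  rw [Fintype.sum_eq_single p.succ fun q hq => ?_]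
  · simp
  · have hqp : (q : ℕ) ≠ p + 1 := fun h => hq (Fin.ext h)
    simp [hqp]

theorem mulVec_last [NonUnitalNonAssocSemiring R] (V : ℕ → Matrix n n R)
    (v : Fin (T + 1) × n → R) (i : n) : (blockSuperdiagonal T V *ᵥ v) (Fin.last T, i) = 0 := by
  simp [Matrix.mulVec, dotProduct, apply_eq_zero_of_le, Fin.is_le]

theorem norm_le [RCLike 𝕜] [DecidableEq n] {V : ℕ → Matrix n n 𝕜} {c : ℝ} (hc : 0 ≤ c)
    (hV : ∀ p < T, ‖V p‖ ≤ c) : ‖blockSuperdiagonal T V‖ ≤ c := by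
  refine l2_opNorm_le_of_sum_norm_sq_mulVec_le hc fun v => ?_
  have block_le (p : Fin T) : ∑ i, ‖(V p *ᵥ fun j => v (p.succ, j)) i‖ ^ 2 ≤
      c ^ 2 * ∑ j, ‖v (p.succ, j)‖ ^ 2 := by
    grw [sum_norm_sq_mulVec_le, hV p p.isLt]
  calc ∑ x, ‖(blockSuperdiagonal T V *ᵥ v) x‖ ^ 2
      = ∑ p : Fin T, ∑ i, ‖(V p *ᵥ fun j => v (p.succ, j)) i‖ ^ 2 := by
        simp [Fintype.sum_prod_type, Fin.sum_univ_castSucc, mulVec_castSucc, mulVec_last]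
    _ ≤ ∑ p : Fin T, c ^ 2 * ∑ j, ‖v (p.succ, j)‖ ^ 2 := sum_le_sum fun p _ => block_le p
    _ = c ^ 2 * ∑ p : Fin T, ∑ j, ‖v (p.succ, j)‖ ^ 2 := (mul_sum ..).symm
    _ ≤ c ^ 2 * ∑ y, ‖v y‖ ^ 2 := by
        rw [Fintype.sum_prod_type, Fin.sum_univ_succ]
        gcongr
        exact le_add_of_nonneg_left (by positivity)

end blockSuperdiagonal

theorem clock_matrix_well_conditioned_general {n 𝕜 : Type*} [Fintype n] [DecidableEq n] [Nonempty n]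
    [RCLike 𝕜] {T : ℕ} {V : ℕ → Matrix n n 𝕜} {c : ℝ} (hc : 0 ≤ c) (hV : ∀ p < T, ‖V p‖ ≤ c)
    {A : Matrix (Fin (T + 1) × n) (Fin (T + 1) × n) 𝕜}
    (hA : ∀ (p q : Fin (T + 1)) (i j : n), A (p, i) (q, j) =
      if (q : ℕ) = (p : ℕ) then (1 : Matrix n n 𝕜) i j
      else if (q : ℕ) = (p : ℕ) + 1 then -(V p i j) else 0) :
    IsUnit A ∧ ‖A‖ ≤ 1 + c ∧ ‖A⁻¹‖ ≤ ∑ k ∈ range (T + 1), c ^ k := by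
  have hW : ‖blockSuperdiagonal T V‖ ≤ c := blockSuperdiagonal.norm_le hc hV
  have hpow : blockSuperdiagonal T V ^ (T + 1) = 0 := blockSuperdiagonal.pow_eq_zero V
  rw [blockSuperdiagonal.eq_one_sub hA]
  refine ⟨IsNilpotent.isUnit_one_sub ⟨T + 1, hpow⟩, ?_, ?_⟩
  · grw [norm_sub_le, CStarRing.norm_one, hW]
  · rw [inv_one_sub_eq_geom_sum_of_pow_eq_zero hpow]
    exact norm_geom_sum_le_geom_sum hW _

/-- The clock block matrix built from unitaries is invertible and
well-conditioned: `‖A‖ ≤ 2` and `‖A⁻¹‖ ≤ T + 1`. -/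
theorem clock_matrix_well_conditioned (N T : ℕ) (hN : 1 ≤ N) (hT : 1 ≤ T)
    (V : ℕ → Matrix (Fin N) (Fin N) ℂ)
    (hV : ∀ p < T, V p ∈ Matrix.unitaryGroup (Fin N) ℂ)
    (A : Matrix (Fin (T + 1) × Fin N) (Fin (T + 1) × Fin N) ℂ)
    (hA : ∀ (p q : Fin (T + 1)) (i j : Fin N),
      A (p, i) (q, j) =
        if (q : ℕ) = (p : ℕ) then (1 : Matrix (Fin N) (Fin N) ℂ) i j
        else if (q : ℕ) = (p : ℕ) + 1 then -(V p i j) else 0) :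
    IsUnit A ∧ opNorm A ≤ 2 ∧ opNorm A⁻¹ ≤ (T : ℝ) + 1 := by
  have : Nonempty (Fin N) := ⟨⟨0, hN⟩⟩
  simpa [opNorm, Matrix.l2_opNorm_toEuclideanCLM, one_add_one_eq_two] using
    clock_matrix_well_conditioned_general zero_le_one
      (fun p hp => l2_opNorm_le_one_of_mem_unitaryGroup (hV p hp)) hA
end
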